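/- Maximum discernability equals tan θ: for unit vectors v, w in a complex Hilbert space H with ⟨v, w⟩ = cos θ for some θ ∈ (0, π/2), the supremum of δ_A over all bounded self-adjoint operators A on H with Δ_v A + Δ_w A > 0 equals tan θ, and this supremum is attained (e.g. by A = (w⟨w,·⟩ − v⟨v,·⟩)/sin θ). -/

import Mathlib

open scoped InnerProductSpace

noncomputable def expVal {H : Type*} [NormedAddCommGroup H] [InnerProductSpace ℂ H]
    (A : H →L[ℂ] H) (v : H) : ℝ := (⟪v, A v⟫_ℂ).re

noncomputable def uncert {H : Type*} [NormedAddCommGroup H] [InnerProductSpace ℂ H]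
    (A : H →L[ℂ] H) (v : H) : ℝ :=
  Real.sqrt ((⟪v, A (A v)⟫_ℂ).re - (expVal A v) ^ 2)

noncomputable def discern {H : Type*} [NormedAddCommGroup H] [InnerProductSpace ℂ H]
    (A : H →L[ℂ] H) (v w : H) : ℝ :=
  |expVal A w - expVal A v| / (uncert A v + uncert A w)

/-!
For symmetric `A` the residual `A v - ⟨A⟩_v v` is orthogonal to the unit vector `v` and has norm
`Δ_v A`. Moving `A` across the inner product gives
`(⟨A⟩_w - ⟨A⟩_v) ⟪v, w⟫ = ⟪A v - ⟨A⟩_v v, w⟫ - ⟪v, A w - ⟨A⟩_w w⟫`,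
and each term on the right sees only the part of one vector orthogonal to the other, whose norm is
`sin θ`. Hence `|⟨A⟩_w - ⟨A⟩_v| cos θ ≤ sin θ (Δ_v A + Δ_w A)`. Equality holds for the difference
of the projections onto `w` and `v`, which squares to `sin² θ` on the span of `v` and `w`.
-/

section SeminormedSpace

variable {𝕜 E : Type*} [RCLike 𝕜] [SeminormedAddCommGroup E] [InnerProductSpace 𝕜 E]

theorem inner_sub_inner_smul_self {u : E} (hu : ‖u‖ = 1) (x : E) :
    ⟪u, x - ⟪u, x⟫_𝕜 • u⟫_𝕜 = 0 := by
  rw [inner_sub_right, inner_smul_right, inner_self_eq_norm_sq_to_K, hu, RCLike.ofReal_one,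
    one_pow, mul_one, sub_self]

theorem norm_sub_inner_smul_sq {u : E} (hu : ‖u‖ = 1) (x : E) :
    ‖x - ⟪u, x⟫_𝕜 • u‖ ^ 2 = ‖x‖ ^ 2 - ‖⟪u, x⟫_𝕜‖ ^ 2 := by
  have orthogonal : ⟪x - ⟪u, x⟫_𝕜 • u, ⟪u, x⟫_𝕜 • u⟫_𝕜 = 0 := by
    rw [inner_smul_right, inner_eq_zero_symm.mp (inner_sub_inner_smul_self hu x), mul_zero]
  have pythagoras := norm_add_sq_eq_norm_sq_add_norm_sq_of_inner_eq_zero _ _ orthogonal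
  rw [sub_add_cancel, norm_smul, hu, mul_one] at pythagoras
  linarith

theorem norm_inner_le_of_inner_eq_zero {u x : E} (hu : ‖u‖ = 1) (hx : ⟪u, x⟫_𝕜 = 0) (y : E) :
    ‖⟪y, x⟫_𝕜‖ ≤ √(‖y‖ ^ 2 - ‖⟪u, y⟫_𝕜‖ ^ 2) * ‖x‖ := by
  have inner_eq : ⟪y, x⟫_𝕜 = ⟪y - ⟪u, y⟫_𝕜 • u, x⟫_𝕜 := by
    rw [inner_sub_left, inner_smul_left, hx, mul_zero, sub_zero]
  rw [inner_eq, ← norm_sub_inner_smul_sq hu, Real.sqrt_sq (norm_nonneg _)]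
  exact norm_inner_le_norm _ _

variable (𝕜) in
/-- The operator `w⟨w,·⟩ - v⟨v,·⟩`, which attains the maximum discernability of unit vectors `v`
and `w`. The normalising factor `1 / sin θ` is dropped, as discernability is scale-invariant. -/
noncomputable def projDiff (v w : E) : E →L[𝕜] E :=
  InnerProductSpace.rankOne 𝕜 w w - InnerProductSpace.rankOne 𝕜 v v

theorem projDiff_apply (v w x : E) : projDiff 𝕜 v w x = ⟪w, x⟫_𝕜 • w - ⟪v, x⟫_𝕜 • v := rfl

theorem neg_projDiff (v w : E) : -projDiff 𝕜 v w = projDiff 𝕜 w v := neg_sub _ _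

theorem isSymmetric_projDiff (v w : E) : (projDiff 𝕜 v w : E →ₗ[𝕜] E).IsSymmetric :=
  (InnerProductSpace.isSymmetric_rankOne_self w).sub (InnerProductSpace.isSymmetric_rankOne_self v)

theorem inner_projDiff_apply_self (v w x : E) :
    ⟪x, projDiff 𝕜 v w x⟫_𝕜 = ((‖⟪w, x⟫_𝕜‖ ^ 2 - ‖⟪v, x⟫_𝕜‖ ^ 2 : ℝ) : 𝕜) := by
  rw [projDiff_apply, inner_sub_right, inner_smul_right, inner_smul_right,
    ← inner_conj_symm x w, ← inner_conj_symm x v, RCLike.mul_conj, RCLike.mul_conj]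
  push_cast
  rfl

theorem projDiff_projDiff_apply_left {v w : E} (hv : ‖v‖ = 1) (hw : ‖w‖ = 1) :
    projDiff 𝕜 v w (projDiff 𝕜 v w v) = ((1 - ‖⟪v, w⟫_𝕜‖ ^ 2 : ℝ) : 𝕜) • v := by
  have apply_left : projDiff 𝕜 v w v = ⟪w, v⟫_𝕜 • w - v := by
    simp [projDiff_apply, inner_self_eq_norm_sq_to_K, hv]
  have apply_right : projDiff 𝕜 v w w = w - ⟪v, w⟫_𝕜 • v := by
    simp [projDiff_apply, inner_self_eq_norm_sq_to_K, hw]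
  have overlap : ⟪w, v⟫_𝕜 * ⟪v, w⟫_𝕜 = (‖⟪v, w⟫_𝕜‖ : 𝕜) ^ 2 := by
    rw [← inner_conj_symm w v, RCLike.conj_mul]
  rw [apply_left, map_sub, map_smul, apply_left, apply_right, smul_sub, smul_smul, overlap]
  push_cast
  module

end SeminormedSpace

section Uncertainty

variable {H : Type*} [NormedAddCommGroup H] [InnerProductSpace ℂ H] {v w : H}

theorem expVal_neg (A : H →L[ℂ] H) (v : H) : expVal (-A) v = -expVal A v := by
  simp [expVal]

theorem uncert_neg (A : H →L[ℂ] H) (v : H) : uncert (-A) v = uncert A v := by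
  simp [uncert, expVal_neg]

theorem coe_expVal {A : H →L[ℂ] H} (hA : (A : H →ₗ[ℂ] H).IsSymmetric) (v : H) :
    (expVal A v : ℂ) = ⟪v, A v⟫_ℂ :=
  hA.coe_re_inner_self_apply v

theorem uncert_eq_norm_sub {A : H →L[ℂ] H} (hA : (A : H →ₗ[ℂ] H).IsSymmetric)
    (hv : ‖v‖ = 1) : uncert A v = ‖A v - ⟪v, A v⟫_ℂ • v‖ := by
  have second_moment : (⟪v, A (A v)⟫_ℂ).re = ‖A v‖ ^ 2 := by
    rw [← hA.apply_clm v (A v)]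
    exact inner_self_eq_norm_sq (𝕜 := ℂ) (A v)
  have norm_inner_sq : ‖⟪v, A v⟫_ℂ‖ ^ 2 = expVal A v ^ 2 := by
    rw [← coe_expVal hA, Complex.norm_real, Real.norm_eq_abs, sq_abs]
  rw [uncert, second_moment, ← norm_inner_sq, ← norm_sub_inner_smul_sq hv,
    Real.sqrt_sq (norm_nonneg _)]

theorem expVal_sub_mul_inner {A : H →L[ℂ] H} (hA : (A : H →ₗ[ℂ] H).IsSymmetric) (v w : H) :
    ((expVal A w - expVal A v : ℝ) : ℂ) * ⟪v, w⟫_ℂ =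
      ⟪A v - ⟪v, A v⟫_ℂ • v, w⟫_ℂ - ⟪v, A w - ⟪w, A w⟫_ℂ • w⟫_ℂ := by
  rw [← coe_expVal hA, ← coe_expVal hA, inner_sub_left, inner_sub_right, inner_smul_left,
    inner_smul_right, Complex.conj_ofReal, hA.apply_clm]
  push_cast
  ring

theorem abs_expVal_sub_mul_norm_inner_le {A : H →L[ℂ] H} (hA : (A : H →ₗ[ℂ] H).IsSymmetric)
    (hv : ‖v‖ = 1) (hw : ‖w‖ = 1) :
    |expVal A w - expVal A v| * ‖⟪v, w⟫_ℂ‖ ≤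
      √(1 - ‖⟪v, w⟫_ℂ‖ ^ 2) * (uncert A v + uncert A w) := by
  have bound_left : ‖⟪A v - ⟪v, A v⟫_ℂ • v, w⟫_ℂ‖ ≤ √(1 - ‖⟪v, w⟫_ℂ‖ ^ 2) * uncert A v := by
    simpa only [hw, one_pow, norm_inner_symm w, ← uncert_eq_norm_sub hA hv] using
      norm_inner_le_of_inner_eq_zero (𝕜 := ℂ) hv (inner_sub_inner_smul_self hv (A v)) w
  have bound_right : ‖⟪v, A w - ⟪w, A w⟫_ℂ • w⟫_ℂ‖ ≤ √(1 - ‖⟪v, w⟫_ℂ‖ ^ 2) * uncert A w := by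
    simpa only [hv, one_pow, norm_inner_symm w, ← uncert_eq_norm_sub hA hw] using
      norm_inner_le_of_inner_eq_zero (𝕜 := ℂ) hw (inner_sub_inner_smul_self hw (A w)) v
  calc |expVal A w - expVal A v| * ‖⟪v, w⟫_ℂ‖
      = ‖⟪A v - ⟪v, A v⟫_ℂ • v, w⟫_ℂ - ⟪v, A w - ⟪w, A w⟫_ℂ • w⟫_ℂ‖ := by
        rw [← expVal_sub_mul_inner hA, norm_mul, Complex.norm_real, Real.norm_eq_abs]
    _ ≤ ‖⟪A v - ⟪v, A v⟫_ℂ • v, w⟫_ℂ‖ + ‖⟪v, A w - ⟪w, A w⟫_ℂ • w⟫_ℂ‖ := norm_sub_le _ _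
    _ ≤ √(1 - ‖⟪v, w⟫_ℂ‖ ^ 2) * (uncert A v + uncert A w) := by
        rw [mul_add]
        exact add_le_add bound_left bound_right

theorem discern_le {A : H →L[ℂ] H} (hA : (A : H →ₗ[ℂ] H).IsSymmetric)
    (hv : ‖v‖ = 1) (hw : ‖w‖ = 1) (hvw : ⟪v, w⟫_ℂ ≠ 0) :
    discern A v w ≤ √(1 - ‖⟪v, w⟫_ℂ‖ ^ 2) / ‖⟪v, w⟫_ℂ‖ := by
  rw [le_div_iff₀ (norm_pos_iff.mpr hvw), discern, div_mul_eq_mul_div]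
  exact div_le_of_le_mul₀ (add_nonneg (Real.sqrt_nonneg _) (Real.sqrt_nonneg _))
    (Real.sqrt_nonneg _) (abs_expVal_sub_mul_norm_inner_le hA hv hw)

theorem expVal_projDiff_left (hv : ‖v‖ = 1) (w : H) :
    expVal (projDiff ℂ v w) v = -(1 - ‖⟪v, w⟫_ℂ‖ ^ 2) := by
  rw [expVal, inner_projDiff_apply_self, inner_self_eq_one_of_norm_eq_one hv, norm_one,
    norm_inner_symm, RCLike.ofReal_eq_complex_ofReal, Complex.ofReal_re]
  ring

theorem expVal_projDiff_right (v : H) (hw : ‖w‖ = 1) :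
    expVal (projDiff ℂ v w) w = 1 - ‖⟪v, w⟫_ℂ‖ ^ 2 := by
  rw [← neg_projDiff, expVal_neg, expVal_projDiff_left hw, neg_neg, norm_inner_symm]

theorem uncert_projDiff_left (hv : ‖v‖ = 1) (hw : ‖w‖ = 1) :
    uncert (projDiff ℂ v w) v = √(1 - ‖⟪v, w⟫_ℂ‖ ^ 2) * ‖⟪v, w⟫_ℂ‖ := by
  have second_moment :
      (⟪v, projDiff ℂ v w (projDiff ℂ v w v)⟫_ℂ).re = 1 - ‖⟪v, w⟫_ℂ‖ ^ 2 := by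
    rw [projDiff_projDiff_apply_left hv hw, inner_smul_right,
      inner_self_eq_one_of_norm_eq_one hv, mul_one]
    exact Complex.ofReal_re _
  have variance_eq : 1 - ‖⟪v, w⟫_ℂ‖ ^ 2 - (-(1 - ‖⟪v, w⟫_ℂ‖ ^ 2)) ^ 2 =
      (1 - ‖⟪v, w⟫_ℂ‖ ^ 2) * ‖⟪v, w⟫_ℂ‖ ^ 2 := by ring
  rw [uncert, second_moment, expVal_projDiff_left hv, variance_eq,
    Real.sqrt_mul' _ (sq_nonneg _), Real.sqrt_sq (norm_nonneg _)]

theorem uncert_projDiff_right (hv : ‖v‖ = 1) (hw : ‖w‖ = 1) :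
    uncert (projDiff ℂ v w) w = √(1 - ‖⟪v, w⟫_ℂ‖ ^ 2) * ‖⟪v, w⟫_ℂ‖ := by
  rw [← neg_projDiff, uncert_neg, uncert_projDiff_left hw hv, norm_inner_symm]

-- For orthogonal or parallel `v` and `w` the left side is `0` by the convention `x / 0 = 0`.
theorem discern_projDiff (hv : ‖v‖ = 1) (hw : ‖w‖ = 1) :
    discern (projDiff ℂ v w) v w = √(1 - ‖⟪v, w⟫_ℂ‖ ^ 2) / ‖⟪v, w⟫_ℂ‖ := by
  have inner_le_one : ‖⟪v, w⟫_ℂ‖ ≤ 1 := by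
    simpa only [hv, hw, mul_one] using norm_inner_le_norm (𝕜 := ℂ) v w
  have one_sub_sq_nonneg : 0 ≤ 1 - ‖⟪v, w⟫_ℂ‖ ^ 2 :=
    sub_nonneg.mpr (pow_le_one₀ (norm_nonneg _) inner_le_one)
  rw [discern, expVal_projDiff_left hv, expVal_projDiff_right v hw, uncert_projDiff_left hv hw,
    uncert_projDiff_right hv hw, sub_neg_eq_add,
    abs_of_nonneg (add_nonneg one_sub_sq_nonneg one_sub_sq_nonneg),
    ← two_mul, ← two_mul, mul_div_mul_left _ _ two_ne_zero, ← div_div, Real.div_sqrt]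

end Uncertainty

theorem max_discern_eq_tan_general {H : Type*} [NormedAddCommGroup H] [InnerProductSpace ℂ H]
    (v w : H) (hv : ‖v‖ = 1) (hw : ‖w‖ = 1) (θ : ℝ) (hθ : θ ∈ Set.Ioo 0 (Real.pi / 2))
    (hcos : ‖⟪v, w⟫_ℂ‖ = Real.cos θ) :
    IsGreatest {x : ℝ | ∃ A : H →L[ℂ] H, (A : H →ₗ[ℂ] H).IsSymmetric ∧
      0 < uncert A v + uncert A w ∧ x = discern A v w} (Real.tan θ) := by
  have cos_pos : 0 < Real.cos θ :=
    Real.cos_pos_of_mem_Ioo ⟨by linarith [hθ.1, Real.pi_pos], hθ.2⟩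
  have sin_pos : 0 < Real.sin θ :=
    Real.sin_pos_of_pos_of_lt_pi hθ.1 (by linarith [hθ.2, Real.pi_pos])
  have sqrt_eq_sin : √(1 - ‖⟪v, w⟫_ℂ‖ ^ 2) = Real.sin θ := by
    rw [hcos, ← Real.abs_sin_eq_sqrt_one_sub_cos_sq, abs_of_pos sin_pos]
  have inner_ne_zero : ⟪v, w⟫_ℂ ≠ 0 := norm_pos_iff.mp (hcos ▸ cos_pos)
  rw [Real.tan_eq_sin_div_cos, ← sqrt_eq_sin, ← hcos]
  refine ⟨⟨projDiff ℂ v w, isSymmetric_projDiff v w, ?_, (discern_projDiff hv hw).symm⟩, ?_⟩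
  · rw [uncert_projDiff_left hv hw, uncert_projDiff_right hv hw, sqrt_eq_sin, hcos]
    positivity
  · rintro _ ⟨A, hA, -, rfl⟩
    exact discern_le hA hv hw inner_ne_zero

/-- The maximum discernability over all bounded self-adjoint operators with
`Δ_v A + Δ_w A > 0` equals `tan θ`, and it is attained. -/
theorem max_discern_eq_tan {H : Type*} [NormedAddCommGroup H]
    [InnerProductSpace ℂ H] [CompleteSpace H] (v w : H) (hv : ‖v‖ = 1) (hw : ‖w‖ = 1)
    (θ : ℝ) (hθ : θ ∈ Set.Ioo 0 (Real.pi / 2)) (hcos : ⟪v, w⟫_ℂ = (Real.cos θ : ℂ)) :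
    IsGreatest {x : ℝ | ∃ A : H →L[ℂ] H, IsSelfAdjoint A ∧
      0 < uncert A v + uncert A w ∧ x = discern A v w} (Real.tan θ) := by
  have cos_nonneg := Real.cos_nonneg_of_mem_Icc ⟨by linarith [hθ.1, Real.pi_pos], hθ.2.le⟩
  simpa only [ContinuousLinearMap.isSelfAdjoint_iff_isSymmetric] using
    max_discern_eq_tan_general v w hv hw θ hθ (by rw [hcos, Complex.norm_of_nonneg cos_nonneg])
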